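/- Assume the coefficients b, σ are continuous in the space variable uniformly in time and have linear growth uniformly in time, and that K ∈ L²([0,T];ℝ^{d×d}). Fix N > 0. Let φⁿ be solutions of the controlled Volterra equation with controls vⁿ ∈ L²([0,T];ℝᵐ) satisfying ∫₀ᵀ |vⁿ_s|² ds ≤ N. If φⁿ → φ uniformly on [0,T] and vⁿ → v weakly in L²([0,T];ℝᵐ) (that is, ∫₀ᵀ ⟨vⁿ_s − v_s, g_s⟩ ds → 0 for every g ∈ L²([0,T];ℝᵐ)), then ∫₀ᵀ |v_s|² ds ≤ N and φ is a solution of the controlled Volterra equation with control v. -/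

import Mathlib

/-!
Written in coordinates, the Volterra integral is a finite sum of scalar integrals
`∫₀ᵗ k aₙ wₙ`, where `k` is an entry of `s ↦ K (t - s)` (in `L²`), `aₙ` is an entry of a coefficient
along `φⁿ`, and `wₙ` is a coordinate of `vⁿ` (or the constant `1` for the drift). By the uniform
modulus of continuity, `aₙ → a` uniformly on `[0, T]` (`coeff_tendsto`). Hence
`∫ k (aₙ - a) wₙ → 0`, as `wₙ` is bounded in `L²`, while `∫ k a (wₙ - w) → 0` by weak convergence,
`k a` being in `L²` (`tendsto_integral_mul_mul`). Since also `φⁿ_t → φ_t`, uniqueness of limits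
gives the equation for `φ`.

The energy bound is weak lower semicontinuity of the `L²` norm (`energy_le_of_weak`).
-/

open MeasureTheory Set Filter Topology

/-- Frobenius norm of a real matrix. -/
noncomputable def frobNorm {n m : ℕ} (A : Matrix (Fin n) (Fin m) ℝ) : ℝ :=
  Real.sqrt (∑ i, ∑ j, (A i j) ^ 2)

/-- Euclidean norm of a vector in `ℝⁿ`. -/
noncomputable def euclNorm {n : ℕ} (x : Fin n → ℝ) : ℝ :=
  Real.sqrt (∑ i, x i ^ 2)

/-- A continuous path `φ` is a solution of the controlled Volterra equation
`φ t = x₀ + ∫₀ᵗ K(t-s)[b(s,φ s) + σ(s,φ s) v s] ds` on `[0,T]`. -/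
def IsCtrlSol {d m : ℕ} (T : ℝ) (K : ℝ → Matrix (Fin d) (Fin d) ℝ)
    (x₀ : Fin d → ℝ) (b : ℝ → (Fin d → ℝ) → Fin d → ℝ)
    (σ : ℝ → (Fin d → ℝ) → Matrix (Fin d) (Fin m) ℝ)
    (v : ℝ → Fin m → ℝ) (φ : ℝ → Fin d → ℝ) : Prop :=
  ContinuousOn φ (Set.Icc 0 T) ∧
  ∀ t ∈ Set.Icc (0:ℝ) T,
    MeasureTheory.IntegrableOn
      (fun s => (K (t - s)).mulVec (b s (φ s) + (σ s (φ s)).mulVec (v s)))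
      (Set.Ioc 0 t) ∧
    φ t = x₀ + ∫ s in Set.Ioc 0 t,
      (K (t - s)).mulVec (b s (φ s) + (σ s (φ s)).mulVec (v s))

lemma abs_le_euclNorm {n : ℕ} (x : Fin n → ℝ) (i : Fin n) : |x i| ≤ euclNorm x := by
  unfold euclNorm
  apply Real.abs_le_sqrt
  exact Finset.single_le_sum (f := fun i => x i ^ 2) (fun j _ => sq_nonneg (x j))
    (Finset.mem_univ i)

lemma euclNorm_sq {n : ℕ} (x : Fin n → ℝ) : euclNorm x ^ 2 = ∑ i, x i ^ 2 :=
  Real.sq_sqrt (Finset.sum_nonneg fun i _ => sq_nonneg (x i))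

lemma euclNorm_nonneg {n : ℕ} (x : Fin n → ℝ) : 0 ≤ euclNorm x := Real.sqrt_nonneg _

lemma frobNorm_nonneg {n m : ℕ} (A : Matrix (Fin n) (Fin m) ℝ) : 0 ≤ frobNorm A :=
  Real.sqrt_nonneg _

lemma abs_le_frobNorm {n m : ℕ} (A : Matrix (Fin n) (Fin m) ℝ) (i : Fin n) (j : Fin m) :
    |A i j| ≤ frobNorm A := by
  unfold frobNorm
  apply Real.abs_le_sqrt
  calc A i j ^ 2 ≤ ∑ j, A i j ^ 2 :=
        Finset.single_le_sum (f := fun j => A i j ^ 2) (fun j _ => sq_nonneg _) (Finset.mem_univ j)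
    _ ≤ ∑ i, ∑ j, A i j ^ 2 :=
        Finset.single_le_sum (f := fun i => ∑ j, A i j ^ 2)
          (fun i _ => Finset.sum_nonneg fun j _ => sq_nonneg _) (Finset.mem_univ i)

lemma euclNorm_le_mul_norm {n : ℕ} (x : Fin n → ℝ) : euclNorm x ≤ (n + 1) * ‖x‖ := by
  have h0 : 0 ≤ ‖x‖ := norm_nonneg x
  unfold euclNorm
  apply Real.sqrt_le_iff.2 ⟨by positivity, ?_⟩
  calc ∑ i, x i ^ 2 ≤ ∑ _i : Fin n, ‖x‖ ^ 2 := by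
        refine Finset.sum_le_sum fun i _ => ?_
        exact sq_le_sq.2 (by simpa using norm_le_pi_norm x i)
    _ = n * ‖x‖ ^ 2 := by simp
    _ ≤ ((n + 1) * ‖x‖) ^ 2 := by
        have hn : (0 : ℝ) ≤ n := by positivity
        nlinarith [mul_nonneg (by positivity : (0 : ℝ) ≤ (n : ℝ) ^ 2 + n + 1) (sq_nonneg ‖x‖)]

/-- The scalar product limit behind the theorem. With `aₙ → a` uniformly and `wₙ` bounded in `L²`,
`∫ k (aₙ - a) wₙ` is at most `ε (∫ k² + N) / 2` by the inequality `|k w| ≤ (k² + w²) / 2`, and the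
remaining term `∫ k a (wₙ - w)` is handled by weak convergence. -/
lemma tendsto_integral_mul_mul {α : Type*} [MeasurableSpace α] {μ : Measure α}
    {k a w : α → ℝ} {an wn : ℕ → α → ℝ} {N : ℝ}
    (hk : MemLp k 2 μ) (hwn : ∀ n, MemLp (wn n) 2 μ) (hw : MemLp w 2 μ)
    (hN : ∀ n, ∫ s, wn n s ^ 2 ∂μ ≤ N)
    (hka : MemLp (fun s => k s * a s) 2 μ) (hkan : ∀ n, MemLp (fun s => k s * an n s) 2 μ)
    (hunif : ∀ ε > (0 : ℝ), ∀ᶠ n in atTop, ∀ᵐ s ∂μ, |an n s - a s| ≤ ε)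
    (hweak : Tendsto (fun n => ∫ s, k s * a s * (wn n s - w s) ∂μ) atTop (𝓝 0)) :
    Tendsto (fun n => ∫ s, k s * an n s * wn n s ∂μ) atTop (𝓝 (∫ s, k s * a s * w s ∂μ)) := by
  have hN0 : 0 ≤ N := le_trans (integral_nonneg fun s => sq_nonneg _) (hN 0)
  have hk0 : 0 ≤ ∫ s, k s ^ 2 ∂μ := integral_nonneg fun s => sq_nonneg _
  have i1 : ∀ n, Integrable (fun s => k s * an n s * wn n s) μ :=
    fun n => (hkan n).integrable_mul (hwn n)
  have i2 : ∀ n, Integrable (fun s => k s * a s * wn n s) μ := fun n => hka.integrable_mul (hwn n)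
  have i3 : Integrable (fun s => k s * a s * w s) μ := hka.integrable_mul hw
  have h1 : Tendsto (fun n => ∫ s, (k s * an n s * wn n s - k s * a s * wn n s) ∂μ)
      atTop (𝓝 0) := by
    rw [Metric.tendsto_atTop']
    intro ε hε
    set D : ℝ := (∫ s, k s ^ 2 ∂μ) + N + 1 with hD
    have hDpos : 0 < D := by positivity
    obtain ⟨n₀, hn₀⟩ := eventually_atTop.1 (hunif (ε / D) (by positivity))
    refine ⟨n₀, fun n hn => ?_⟩
    rw [dist_zero_right]
    have ib : Integrable (fun s => ε / D * ((k s ^ 2 + wn n s ^ 2) / 2)) μ :=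
      ((hk.integrable_sq.add (hwn n).integrable_sq).div_const 2).const_mul _
    calc ‖∫ s, (k s * an n s * wn n s - k s * a s * wn n s) ∂μ‖
        ≤ ∫ s, ε / D * ((k s ^ 2 + wn n s ^ 2) / 2) ∂μ := by
          refine norm_integral_le_of_norm_le ib ?_
          filter_upwards [hn₀ n hn.le] with s hs
          have e : k s * an n s * wn n s - k s * a s * wn n s
              = (an n s - a s) * (k s * wn n s) := by ring
          rw [e, Real.norm_eq_abs, abs_mul]
          refine mul_le_mul hs ?_ (abs_nonneg _) (by positivity)
          rw [abs_mul]
          nlinarith [sq_nonneg (|k s| - |wn n s|), sq_abs (k s), sq_abs (wn n s)]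
      _ = ε / D * (((∫ s, k s ^ 2 ∂μ) + ∫ s, wn n s ^ 2 ∂μ) / 2) := by
          rw [integral_const_mul, integral_div, integral_add hk.integrable_sq (hwn n).integrable_sq]
      _ < ε / D * D := by
          refine mul_lt_mul_of_pos_left ?_ (by positivity)
          have := hN n
          linarith
      _ = ε := by field_simp
  have h2 := (h1.add hweak).add_const (∫ s, k s * a s * w s ∂μ)
  rw [zero_add, zero_add] at h2
  refine h2.congr fun n => ?_
  have e : ∀ s, k s * a s * (wn n s - w s) = k s * a s * wn n s - k s * a s * w s :=
    fun s => by ring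
  simp only [e]
  rw [integral_sub (i1 n) (i2 n), integral_sub (i2 n) i3]
  ring

/-- Coordinatewise expansion of the Volterra integrand, reducing the equation to scalar
integrals. -/
lemma volterra_integral_expand {α : Type*} [MeasurableSpace α] {μ : Measure α} {d m : ℕ}
    {A : α → Matrix (Fin d) (Fin d) ℝ} {β : α → Fin d → ℝ} {S : α → Matrix (Fin d) (Fin m) ℝ}
    {w : α → Fin m → ℝ}
    (h1 : ∀ i j, Integrable (fun s => A s i j * β s j * 1) μ)
    (h2 : ∀ i j l, Integrable (fun s => A s i j * S s j l * w s l) μ) :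
    Integrable (fun s => (A s).mulVec (β s + (S s).mulVec (w s))) μ ∧
    ∀ i, (∫ s, (A s).mulVec (β s + (S s).mulVec (w s)) ∂μ) i =
      ∑ j, ((∫ s, A s i j * β s j * 1 ∂μ) + ∑ l, ∫ s, A s i j * S s j l * w s l ∂μ) := by
  have e : ∀ i s, (A s).mulVec (β s + (S s).mulVec (w s)) i =
      ∑ j, (A s i j * β s j * 1 + ∑ l, A s i j * S s j l * w s l) := by
    intro i s
    simp only [Matrix.mulVec, dotProduct, Pi.add_apply, mul_add, Finset.mul_sum, mul_one, mul_assoc]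
  have hadd : ∀ i j, Integrable
      (fun s => A s i j * β s j * 1 + ∑ l, A s i j * S s j l * w s l) μ :=
    fun i j => (h1 i j).add (integrable_finsetSum _ fun l _ => h2 i j l)
  have hI : ∀ i, Integrable (fun s => (A s).mulVec (β s + (S s).mulVec (w s)) i) μ := by
    intro i
    simp only [e]
    exact integrable_finsetSum _ fun j _ => hadd i j
  refine ⟨Integrable.of_eval hI, fun i => ?_⟩
  rw [eval_integral hI]
  simp only [e]
  rw [integral_finsetSum _ fun j _ => hadd i j]
  refine Finset.sum_congr rfl fun j _ => ?_
  rw [integral_add (h1 i j) (integrable_finsetSum _ fun l _ => h2 i j l),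
    integral_finsetSum _ fun l _ => h2 i j l]

lemma memLp_eval_of_euclNorm_sq {μ : Measure ℝ} {m : ℕ} {w : ℝ → Fin m → ℝ} (hw : Measurable w)
    (h : Integrable (fun s => euclNorm (w s) ^ 2) μ) (l : Fin m) :
    MemLp (fun s => w s l) 2 μ := by
  have hm : Measurable fun s => w s l := (measurable_pi_apply l).comp hw
  rw [memLp_two_iff_integrable_sq hm.aestronglyMeasurable]
  refine h.mono' (hm.pow_const 2).aestronglyMeasurable (Eventually.of_forall fun s => ?_)
  rw [Real.norm_eq_abs, abs_of_nonneg (sq_nonneg _)]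
  exact sq_le_sq.2 ((abs_le_euclNorm (w s) l).trans (le_abs_self _))

/-- The reflected kernel `s ↦ K (t - s)` is square integrable on `(0, t]`. -/
lemma memLp_kernel {d : ℕ} {T : ℝ} {K : ℝ → Matrix (Fin d) (Fin d) ℝ}
    (hKmeas : ∀ i j, Measurable fun t => K t i j)
    (hKL2 : IntegrableOn (fun t => frobNorm (K t) ^ 2) (Ioc 0 T))
    {t : ℝ} (ht : t ∈ Icc (0 : ℝ) T) (i j : Fin d) :
    MemLp (fun s => K (t - s) i j) 2 (volume.restrict (Ioc 0 t)) := by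
  have hm : Measurable fun s => K (t - s) i j :=
    (hKmeas i j).comp (measurable_const.sub measurable_id)
  rw [memLp_two_iff_integrable_sq hm.aestronglyMeasurable]
  have h1 : IntegrableOn (fun s => K s i j ^ 2) (Ioc 0 t) := by
    refine (hKL2.mono_set (Ioc_subset_Ioc_right ht.2)).mono'
      ((hKmeas i j).pow_const 2).aestronglyMeasurable (Eventually.of_forall fun s => ?_)
    rw [Real.norm_eq_abs, abs_of_nonneg (sq_nonneg _)]
    exact sq_le_sq.2 ((abs_le_frobNorm (K s) i j).trans (le_abs_self _))
  have h2 := ((intervalIntegrable_iff_integrableOn_Ioc_of_le ht.1).2 h1).comp_sub_left t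
  rw [sub_zero, sub_self] at h2
  exact (intervalIntegrable_iff_integrableOn_Ioc_of_le ht.1).1 h2.symm

/-- Weak convergence tested against one coordinate, on a subinterval `(0, t]`, with a test function
that need only be a.e. measurable. -/
lemma tendsto_weak_coord {m : ℕ} {T : ℝ} {vseq : ℕ → ℝ → Fin m → ℝ} {v : ℝ → Fin m → ℝ}
    (hweak : ∀ g : ℝ → Fin m → ℝ, Measurable g →
      IntegrableOn (fun s => euclNorm (g s) ^ 2) (Ioc 0 T) →
      Tendsto (fun n => ∫ s in Ioc 0 T, ∑ i, (vseq n s i - v s i) * g s i)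
        atTop (nhds 0))
    {t : ℝ} (ht : t ∈ Icc (0 : ℝ) T) (l : Fin m) {h : ℝ → ℝ}
    (hh : MemLp h 2 (volume.restrict (Ioc 0 t))) :
    Tendsto (fun n => ∫ s in Ioc 0 t, h s * (vseq n s l - v s l)) atTop (𝓝 0) := by
  classical
  -- a measurable representative of `h`, extended by zero and placed in coordinate `l`
  set k : ℝ → ℝ := (Ioc 0 t).indicator (hh.1.mk h) with hkdef
  have hkm : Measurable k := hh.1.stronglyMeasurable_mk.measurable.indicator measurableSet_Ioc
  have hmk : MemLp (hh.1.mk h) 2 (volume.restrict (Ioc 0 t)) := (memLp_congr_ae hh.1.ae_eq_mk).1 hh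
  have hk2 : Integrable (fun s => k s ^ 2) (volume.restrict (Ioc 0 T)) :=
    (((memLp_indicator_iff_restrict measurableSet_Ioc).2 hmk).integrable_sq).integrableOn
  have hsum : ∀ s, ∑ i, (Pi.single l (k s) : Fin m → ℝ) i ^ 2 = k s ^ 2 := fun s => by
    rw [Finset.sum_eq_single l] <;> simp +contextual
  have key := hweak (fun s => Pi.single l (k s))
    (by
      refine measurable_pi_lambda _ fun i => ?_
      by_cases hi : i = l
      · subst hi; simpa using hkm
      · simp [hi])
    (by simp only [euclNorm_sq, hsum]; exact hk2)
  refine key.congr fun n => ?_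
  have e : ∀ s, ∑ i, (vseq n s i - v s i) * (Pi.single l (k s) : Fin m → ℝ) i
      = (Ioc 0 t).indicator (fun s => hh.1.mk h s * (vseq n s l - v s l)) s := fun s => by
    rw [Finset.sum_eq_single l (by simp +contextual) (by simp)]
    by_cases hs : s ∈ Ioc 0 t <;> simp [hkdef, hs, mul_comm]
  simp only [e]
  rw [setIntegral_indicator measurableSet_Ioc, inter_eq_right.2 (Ioc_subset_Ioc_right ht.2)]
  refine integral_congr_ae ?_
  filter_upwards [hh.1.ae_eq_mk] with s hs
  rw [hs]

/-- The closed ball of `L²` is weakly closed: integrate `|vₙ|² - |v|² ≥ 2 ⟨vₙ - v, v⟩`. -/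
lemma energy_le_of_weak {μ : Measure ℝ} {m : ℕ} {N : ℝ}
    {vseq : ℕ → ℝ → Fin m → ℝ} {v : ℝ → Fin m → ℝ}
    (hvseqmeas : ∀ n, Measurable (vseq n)) (hvmeas : Measurable v)
    (hvseqL2 : ∀ n, Integrable (fun s => euclNorm (vseq n s) ^ 2) μ)
    (hvL2 : Integrable (fun s => euclNorm (v s) ^ 2) μ)
    (hvseqN : ∀ n, (∫ s, euclNorm (vseq n s) ^ 2 ∂μ) ≤ N)
    (hweak : Tendsto (fun n => ∫ s, ∑ i, (vseq n s i - v s i) * v s i ∂μ) atTop (𝓝 0)) :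
    (∫ s, euclNorm (v s) ^ 2 ∂μ) ≤ N := by
  have h := (hweak.const_mul 2).const_add (∫ s, euclNorm (v s) ^ 2 ∂μ)
  rw [mul_zero, add_zero] at h
  refine le_of_tendsto' h fun n => le_trans ?_ (hvseqN n)
  have hi : Integrable (fun s => ∑ i, (vseq n s i - v s i) * v s i) μ :=
    integrable_finsetSum _ fun i _ =>
      ((memLp_eval_of_euclNorm_sq (hvseqmeas n) (hvseqL2 n) i).sub
        (memLp_eval_of_euclNorm_sq hvmeas hvL2 i)).integrable_mul
        (memLp_eval_of_euclNorm_sq hvmeas hvL2 i)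
  rw [← integral_const_mul, ← integral_add hvL2 (hi.const_mul 2)]
  refine integral_mono (hvL2.add (hi.const_mul 2)) (hvseqL2 n) fun s => ?_
  simp only [euclNorm_sq, Finset.mul_sum, ← Finset.sum_add_distrib]
  refine Finset.sum_le_sum fun i _ => ?_
  nlinarith [sq_nonneg (vseq n s i - v s i)]

lemma coeff_bounded {d m : ℕ} {T : ℝ} {b : ℝ → (Fin d → ℝ) → Fin d → ℝ}
    {σ : ℝ → (Fin d → ℝ) → Matrix (Fin d) (Fin m) ℝ} {C_L : ℝ} (hCL : 0 < C_L)
    (hgrowth : ∀ t ∈ Icc (0:ℝ) T, ∀ x,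
      euclNorm (b t x) + frobNorm (σ t x) ≤ C_L * (1 + euclNorm x))
    {f : ℝ → Fin d → ℝ} (hf : ContinuousOn f (Icc 0 T)) :
    ∃ C : ℝ, ∀ s ∈ Icc (0:ℝ) T,
      (∀ j, |b s (f s) j| ≤ C) ∧ ∀ j l, |σ s (f s) j l| ≤ C := by
  obtain ⟨R, hR⟩ := isCompact_Icc.exists_bound_of_continuousOn hf
  refine ⟨C_L * (1 + (d + 1) * R), fun s hs => ?_⟩
  have h1 : euclNorm (f s) ≤ (d + 1) * R :=
    (euclNorm_le_mul_norm _).trans (mul_le_mul_of_nonneg_left (hR s hs) (by positivity))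
  have h2 : C_L * (1 + euclNorm (f s)) ≤ C_L * (1 + (d + 1) * R) :=
    mul_le_mul_of_nonneg_left (by linarith) hCL.le
  have h3 := hgrowth s hs (f s)
  exact ⟨fun j => by linarith [abs_le_euclNorm (b s (f s)) j, frobNorm_nonneg (σ s (f s))],
    fun j l => by linarith [abs_le_frobNorm (σ s (f s)) j l, euclNorm_nonneg (b s (f s))]⟩

/-- Coefficients evaluated along uniformly convergent paths converge uniformly: all but finitely
many of the paths stay in a common ball, where the modulus of continuity is uniform in time. -/
lemma coeff_tendsto {d m : ℕ} {T : ℝ} {b : ℝ → (Fin d → ℝ) → Fin d → ℝ}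
    {σ : ℝ → (Fin d → ℝ) → Matrix (Fin d) (Fin m) ℝ}
    (hucont : ∀ M > (0:ℝ), ∀ ε > (0:ℝ), ∃ δ > (0:ℝ), ∀ t ∈ Icc (0:ℝ) T, ∀ x y : Fin d → ℝ,
      euclNorm x ≤ M → euclNorm y ≤ M → euclNorm (x - y) ≤ δ →
      euclNorm (b t x - b t y) + frobNorm (σ t x - σ t y) ≤ ε)
    {φseq : ℕ → ℝ → Fin d → ℝ} {φ : ℝ → Fin d → ℝ} (hφ : ContinuousOn φ (Icc 0 T))
    (hunif : TendstoUniformlyOn φseq φ atTop (Icc (0:ℝ) T)) {ε : ℝ} (hε : 0 < ε) :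
    ∀ᶠ n in atTop, ∀ s ∈ Icc (0:ℝ) T, (∀ j, |b s (φseq n s) j - b s (φ s) j| ≤ ε) ∧
      ∀ j l, |σ s (φseq n s) j l - σ s (φ s) j l| ≤ ε := by
  obtain ⟨R, hR⟩ := isCompact_Icc.exists_bound_of_continuousOn hφ
  have hd : (0 : ℝ) < d + 1 := by positivity
  have hM : 0 < (d + 1) * (|R| + 1) := by positivity
  obtain ⟨δ, hδ, H⟩ := hucont _ hM ε hε
  rw [Metric.tendstoUniformlyOn_iff] at hunif
  filter_upwards [hunif (min 1 (δ / (d + 1))) (by positivity)] with n hn s hs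
  have hns := hn s hs
  rw [dist_comm, dist_eq_norm] at hns
  have hφs : ‖φ s‖ ≤ |R| := (hR s hs).trans (le_abs_self R)
  have hφn : ‖φseq n s‖ ≤ |R| + 1 := by
    have := norm_le_norm_add_norm_sub' (φseq n s) (φ s)
    have := min_le_left 1 (δ / (d + 1))
    linarith
  have hδ' : (d + 1) * ‖φseq n s - φ s‖ ≤ δ := by
    have := hns.le.trans (min_le_right 1 (δ / (d + 1)))
    rw [le_div_iff₀ hd] at this
    linarith
  have h := H s hs (φseq n s) (φ s)
    ((euclNorm_le_mul_norm _).trans (mul_le_mul_of_nonneg_left hφn hd.le))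
    ((euclNorm_le_mul_norm _).trans (mul_le_mul_of_nonneg_left (by linarith) hd.le))
    ((euclNorm_le_mul_norm _).trans hδ')
  refine ⟨fun j => ?_, fun j l => ?_⟩
  · have := abs_le_euclNorm (b s (φseq n s) - b s (φ s)) j
    rw [Pi.sub_apply] at this
    linarith [frobNorm_nonneg (σ s (φseq n s) - σ s (φ s))]
  · have := abs_le_frobNorm (σ s (φseq n s) - σ s (φ s)) j l
    rw [Matrix.sub_apply] at this
    linarith [euclNorm_nonneg (b s (φseq n s) - b s (φ s))]

/-- **Stability of the controlled Volterra equation under uniform convergence of paths and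
weak L² convergence of controls.** If `φⁿ` solves the equation with control `vⁿ` of energy
at most `N`, `φⁿ → φ` uniformly on `[0,T]` and `vⁿ → v` weakly in `L²([0,T];ℝᵐ)`, then
`∫₀ᵀ |v|² ≤ N` and `φ` solves the equation with control `v`. -/
theorem controlled_volterra_closed_under_limits
    (d m : ℕ) (T : ℝ) (hT : 0 < T)
    (K : ℝ → Matrix (Fin d) (Fin d) ℝ)
    (hKmeas : ∀ i j, Measurable fun t => K t i j)
    (hKL2 : IntegrableOn (fun t => frobNorm (K t) ^ 2) (Ioc 0 T))
    (x₀ : Fin d → ℝ)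
    (b : ℝ → (Fin d → ℝ) → Fin d → ℝ)
    (σ : ℝ → (Fin d → ℝ) → Matrix (Fin d) (Fin m) ℝ)
    (hbmeas : Measurable (Function.uncurry b))
    (hσmeas : ∀ i j, Measurable fun p : ℝ × (Fin d → ℝ) => σ p.1 p.2 i j)
    (hucont : ∀ M > (0:ℝ), ∀ ε > (0:ℝ), ∃ δ > (0:ℝ), ∀ t ∈ Icc (0:ℝ) T, ∀ x y : Fin d → ℝ,
      euclNorm x ≤ M → euclNorm y ≤ M → euclNorm (x - y) ≤ δ →
      euclNorm (b t x - b t y) + frobNorm (σ t x - σ t y) ≤ ε)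
    (C_L : ℝ) (hCL : 0 < C_L)
    (hgrowth : ∀ t ∈ Icc (0:ℝ) T, ∀ x,
      euclNorm (b t x) + frobNorm (σ t x) ≤ C_L * (1 + euclNorm x))
    (N : ℝ) (hN : 0 < N)
    (φseq : ℕ → ℝ → Fin d → ℝ) (vseq : ℕ → ℝ → Fin m → ℝ)
    (hvseqmeas : ∀ n, Measurable (vseq n))
    (hvseqL2 : ∀ n, IntegrableOn (fun s => euclNorm (vseq n s) ^ 2) (Ioc 0 T))
    (hvseqN : ∀ n, (∫ s in Ioc 0 T, euclNorm (vseq n s) ^ 2) ≤ N)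
    (hsol : ∀ n, IsCtrlSol T K x₀ b σ (vseq n) (φseq n))
    (φ : ℝ → Fin d → ℝ) (v : ℝ → Fin m → ℝ)
    (hvmeas : Measurable v)
    (hvL2 : IntegrableOn (fun s => euclNorm (v s) ^ 2) (Ioc 0 T))
    (hunif : TendstoUniformlyOn φseq φ atTop (Icc (0:ℝ) T))
    (hweak : ∀ g : ℝ → Fin m → ℝ, Measurable g →
      IntegrableOn (fun s => euclNorm (g s) ^ 2) (Ioc 0 T) →
      Tendsto (fun n => ∫ s in Ioc 0 T, ∑ i, (vseq n s i - v s i) * g s i)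
        atTop (nhds 0)) :
    (∫ s in Ioc 0 T, euclNorm (v s) ^ 2) ≤ N ∧ IsCtrlSol T K x₀ b σ v φ := by
  refine ⟨energy_le_of_weak hvseqmeas hvmeas hvseqL2 hvL2 hvseqN (hweak v hvmeas hvL2), ?_⟩
  have hφ : ContinuousOn φ (Icc 0 T) :=
    hunif.continuousOn (Frequently.of_forall fun n => (hsol n).1)
  refine ⟨hφ, fun t ht => ?_⟩
  have hsub : Ioc 0 t ⊆ Icc 0 T := fun s hs => ⟨hs.1.le, hs.2.trans ht.2⟩
  have hsub' : Ioc 0 t ⊆ Ioc 0 T := Ioc_subset_Ioc_right ht.2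
  have hae : ∀ᵐ s ∂(volume.restrict (Ioc 0 t)), s ∈ Icc (0:ℝ) T := by
    filter_upwards [ae_restrict_mem measurableSet_Ioc] with s hs using hsub hs
  have hK := memLp_kernel hKmeas hKL2 ht
  have hpath : ∀ f : ℝ → Fin d → ℝ, ContinuousOn f (Icc 0 T) →
      AEMeasurable (fun s => (s, f s)) (volume.restrict (Ioc 0 t)) := fun f hf =>
    aemeasurable_id.prodMk ((hf.mono hsub).aemeasurable measurableSet_Ioc)
  have hKb : ∀ f : ℝ → Fin d → ℝ, ContinuousOn f (Icc 0 T) → ∀ i j,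
      MemLp (fun s => K (t - s) i j * b s (f s) j) 2 (volume.restrict (Ioc 0 t)) := by
    intro f hf i j
    obtain ⟨C, hC⟩ := coeff_bounded hCL hgrowth hf
    have hm : AEStronglyMeasurable (fun s => b s (f s) j) (volume.restrict (Ioc 0 t)) :=
      (((measurable_pi_apply j).comp hbmeas).comp_aemeasurable (hpath f hf)).aestronglyMeasurable
    refine (hK i j).of_le_mul (c := C) ((hK i j).1.mul hm) ?_
    filter_upwards [hae] with s hs
    rw [norm_mul, mul_comm]
    exact mul_le_mul_of_nonneg_right ((hC s hs).1 j) (norm_nonneg _)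
  have hKσ : ∀ f : ℝ → Fin d → ℝ, ContinuousOn f (Icc 0 T) → ∀ i j l,
      MemLp (fun s => K (t - s) i j * σ s (f s) j l) 2 (volume.restrict (Ioc 0 t)) := by
    intro f hf i j l
    obtain ⟨C, hC⟩ := coeff_bounded hCL hgrowth hf
    have hm : AEStronglyMeasurable (fun s => σ s (f s) j l) (volume.restrict (Ioc 0 t)) :=
      ((hσmeas j l).comp_aemeasurable (hpath f hf)).aestronglyMeasurable
    refine (hK i j).of_le_mul (c := C) ((hK i j).1.mul hm) ?_
    filter_upwards [hae] with s hs
    rw [norm_mul, mul_comm]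
    exact mul_le_mul_of_nonneg_right ((hC s hs).2 j l) (norm_nonneg _)
  have hvn : ∀ l n, MemLp (fun s => vseq n s l) 2 (volume.restrict (Ioc 0 t)) := fun l n =>
    memLp_eval_of_euclNorm_sq (hvseqmeas n) ((hvseqL2 n).mono_set hsub') l
  have hv : ∀ l, MemLp (fun s => v s l) 2 (volume.restrict (Ioc 0 t)) := fun l =>
    memLp_eval_of_euclNorm_sq hvmeas (hvL2.mono_set hsub') l
  have hone : MemLp (fun _ : ℝ => (1 : ℝ)) 2 (volume.restrict (Ioc 0 t)) := memLp_const 1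
  have hvnN : ∀ l n, ∫ s in Ioc 0 t, vseq n s l ^ 2 ≤ N := by
    intro l n
    calc ∫ s in Ioc 0 t, vseq n s l ^ 2 ≤ ∫ s in Ioc 0 t, euclNorm (vseq n s) ^ 2 := by
          refine integral_mono (hvn l n).integrable_sq ((hvseqL2 n).mono_set hsub') fun s => ?_
          exact sq_le_sq.2 ((abs_le_euclNorm (vseq n s) l).trans (le_abs_self _))
      _ ≤ ∫ s in Ioc 0 T, euclNorm (vseq n s) ^ 2 :=
          setIntegral_mono_set (hvseqL2 n) (Eventually.of_forall fun s => sq_nonneg _)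
            hsub'.eventuallyLE
      _ ≤ N := hvseqN n
  have hexp : ∀ (f : ℝ → Fin d → ℝ) (w : ℝ → Fin m → ℝ), ContinuousOn f (Icc 0 T) →
      (∀ l, MemLp (fun s => w s l) 2 (volume.restrict (Ioc 0 t))) → _ := fun f w hf hw =>
    volterra_integral_expand (μ := volume.restrict (Ioc 0 t)) (A := fun s => K (t - s))
      (β := fun s => b s (f s)) (S := fun s => σ s (f s)) (w := w)
      (fun i j => (hKb f hf i j).integrable_mul hone)
      (fun i j l => (hKσ f hf i j l).integrable_mul (hw l))
  refine ⟨(hexp φ v hφ hv).1, ?_⟩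
  ext i
  rw [Pi.add_apply, (hexp φ v hφ hv).2 i]
  have hlim : Tendsto (fun n => φseq n t i) atTop (𝓝 (φ t i)) :=
    (tendsto_pi_nhds.1 (hunif.tendsto_at ht)) i
  refine tendsto_nhds_unique hlim ?_
  have hseq : ∀ n, φseq n t i = x₀ i + ∑ j, ((∫ s in Ioc 0 t, K (t - s) i j * b s (φseq n s) j * 1)
      + ∑ l, ∫ s in Ioc 0 t, K (t - s) i j * σ s (φseq n s) j l * vseq n s l) := by
    intro n
    rw [((hsol n).2 t ht).2, Pi.add_apply,
      (hexp (φseq n) (vseq n) (hsol n).1 fun l => hvn l n).2 i]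
  simp only [hseq]
  refine Tendsto.const_add _ (tendsto_finsetSum _ fun j _ =>
    Tendsto.add ?_ (tendsto_finsetSum _ fun l _ => ?_))
  -- the drift term is the scalar limit with the constant control `1`
  · refine tendsto_integral_mul_mul (k := fun s => K (t - s) i j) (a := fun s => b s (φ s) j)
      (an := fun n s => b s (φseq n s) j) (w := fun _ => 1) (wn := fun _ _ => 1)
      (hK i j) (fun _ => hone) hone (fun _ => le_rfl) (hKb φ hφ i j)
      (fun n => hKb _ (hsol n).1 i j) (fun ε hε => ?_) (by simp)
    filter_upwards [coeff_tendsto hucont hφ hunif hε] with n hn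
    filter_upwards [hae] with s hs using (hn s hs).1 j
  · refine tendsto_integral_mul_mul (k := fun s => K (t - s) i j) (a := fun s => σ s (φ s) j l)
      (an := fun n s => σ s (φseq n s) j l) (w := fun s => v s l) (wn := fun n s => vseq n s l)
      (hK i j) (hvn l) (hv l) (hvnN l) (hKσ φ hφ i j l)
      (fun n => hKσ _ (hsol n).1 i j l) (fun ε hε => ?_)
      (tendsto_weak_coord hweak ht l (hKσ φ hφ i j l))
    filter_upwards [coeff_tendsto hucont hφ hunif hε] with n hn
    filter_upwards [hae] with s hs using (hn s hs).2 j l
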